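/- Let q = r^2 with r an odd prime power. Suppose q − 1 = e_1 f_1 = e_2 f_2, there exists an integer l ≥ 2 with e_1 ≡ 2^l (mod 2^{l+1}) and 2^l | e_2, and that 2e_2 | e_1(r+1) and e_1 | e_2(r−1). Let s, t be integers with 1 ≤ s ≤ D_1 and 1 ≤ t ≤ D_2, and set n_1 = s·f_1 + t·f_2. If the integer t·e_1(r+1)/(2e_2) + t(r+1)/2 is even, 4 | (t−1)(r+1), and n_1 is even, then there exists an MDS self-dual code over F_q of length n_1 + 2, i.e., a linear code C ⊆ F_q^{n_1+2} with C = C⊥, dim C = (n_1+2)/2, and minimum Hamming distance (n_1+2)/2 + 1. -/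

import Mathlib

/-- The Euclidean dual of a linear code `C ⊆ F^n`. -/
def dualCode {F : Type*} [Field F] {n : ℕ} (C : Submodule F (Fin n → F)) :
    Submodule F (Fin n → F) where
  carrier := {x | ∀ c ∈ C, ∑ i, x i * c i = 0}
  add_mem' := by
    intro a b ha hb c hc
    simp only [Set.mem_setOf_eq] at ha hb ⊢
    simp [Pi.add_apply, add_mul, Finset.sum_add_distrib, ha c hc, hb c hc]
  zero_mem' := by intro c hc; simp
  smul_mem' := by
    intro r a ha c hc
    simp only [Set.mem_setOf_eq] at ha ⊢
    simp [Pi.smul_apply, smul_eq_mul, mul_assoc, ← Finset.mul_sum, ha c hc]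

/-- `C` has minimum Hamming distance `d`. -/
def IsMinDist {F : Type*} [Field F] [DecidableEq F] {n : ℕ}
    (C : Submodule F (Fin n → F)) (d : ℕ) : Prop :=
  (∀ c ∈ C, c ≠ 0 → d ≤ hammingNorm c) ∧ ∃ c ∈ C, c ≠ 0 ∧ hammingNorm c = d

/-! Let `m = e1 / gcd e1 e2`, which is odd, and `n = e2 / gcd e1 e2`. Take `s` roots `c` of
`X ^ m - 1` and `t` roots `d` of `X ^ n + 1`. The divisibility conditions put the `c` in the
subfield with `r` elements, all of whose nonzero elements are squares in `F`, and make the `d`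
elements of norm one: `d ^ (r + 1) = 1`. For norm-one `x ≠ y` the quadratic character of `x - y`
is determined by `(x * y) ^ ((r + 1) / 2)`, and the two parity conditions make these characters
cancel, so that `P = X * ∏ (X ^ f1 - c) * ∏ (X ^ f2 - d)` has simple roots and square derivatives
`P'(x)` at all of them. As `-1` is a square too, the extended generalized Reed–Solomon code on the
roots of `P`, with the square roots of `-P'(x)⁻¹` as multipliers, is self-dual by Lagrange
interpolation. -/

section

open Polynomial Finset Module

variable {F : Type*} [Field F] {N : ℕ}

/-- `C` is an MDS self-dual code: it attains the Singleton bound, which for a self-dual code of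
length `n` reads `d = n / 2 + 1`. -/
def IsMDSSelfDual [DecidableEq F] {n : ℕ} (C : Submodule F (Fin n → F)) : Prop :=
  dualCode C = C ∧ finrank F C = n / 2 ∧ IsMinDist C (n / 2 + 1)

lemma natDegree_lt_of_mem_degreeLT {R : Type*} [Semiring R] {k : ℕ} {f : R[X]}
    (hf : f ∈ degreeLT R k) (hf₀ : f ≠ 0) : f.natDegree < k :=
  (natDegree_lt_iff_degree_lt hf₀).2 (mem_degreeLT.1 hf)

lemma finrank_dualCode {n : ℕ} (C : Submodule F (Fin n → F)) :
    finrank F (dualCode C) = n - finrank F C := by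
  let B : LinearMap.BilinForm F (Fin n → F) := dotProductBilin F F
  have hB : B.Nondegenerate :=
    ⟨fun x hx ↦ dotProduct_eq_zero x hx,
      fun x hx ↦ dotProduct_eq_zero x fun w ↦ (dotProduct_comm x w).trans (hx w)⟩
  have hdual : dualCode C = B.orthogonal C := by
    ext x
    exact forall₂_congr fun c _ ↦ by
      change x ⬝ᵥ c = 0 ↔ c ⬝ᵥ x = 0
      rw [dotProduct_comm]
  rw [hdual, LinearMap.BilinForm.finrank_orthogonal hB, finrank_fin_fun]

/-- The encoder of the extended generalized Reed–Solomon code of dimension `k` with evaluation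
points `a` and column multipliers `v`. The last coordinate is the coefficient of `X ^ (k - 1)`,
the value at infinity of a polynomial of degree less than `k`. -/
noncomputable def extendedGRSEncoder (a v : Fin N → F) (k : ℕ) : F[X] →ₗ[F] Fin (N + 1) → F :=
  LinearMap.pi (Fin.snoc (fun i ↦ v i • leval (a i)) (lcoeff F (k - 1)))

/-- The extended generalized Reed–Solomon code: the image of the polynomials of degree less than
`k` under `extendedGRSEncoder a v k`. -/
noncomputable def extendedGRSCode (a v : Fin N → F) (k : ℕ) : Submodule F (Fin (N + 1) → F) :=
  (degreeLT F k).map (extendedGRSEncoder a v k)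

section ExtendedGRS

variable {a v : Fin N → F} {k : ℕ}

@[simp]
lemma extendedGRSEncoder_castSucc (f : F[X]) (i : Fin N) :
    extendedGRSEncoder a v k f i.castSucc = v i * f.eval (a i) := by
  simp [extendedGRSEncoder]

@[simp]
lemma extendedGRSEncoder_last (f : F[X]) :
    extendedGRSEncoder a v k f (Fin.last N) = f.coeff (k - 1) := by
  simp [extendedGRSEncoder]

lemma card_filter_eval_eq_zero_le_natDegree [DecidableEq F] (ha : a.Injective) {f : F[X]}
    (hf : f ≠ 0) : #{i | f.eval (a i) = 0} ≤ f.natDegree := by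
  rw [← card_image_of_injective _ ha]
  refine card_le_degree_of_subset_roots fun x hx ↦ ?_
  obtain ⟨i, hi, rfl⟩ := mem_image.1 (mem_def.2 hx)
  exact (mem_roots hf).2 (mem_filter.1 hi).2

lemma hammingNorm_extendedGRSEncoder_add [DecidableEq F] (hv : ∀ i, v i ≠ 0) (f : F[X]) :
    hammingNorm (extendedGRSEncoder a v k f) + #{i | f.eval (a i) = 0} =
      N + if f.coeff (k - 1) = 0 then 0 else 1 := by
  have hN : #{i | f.eval (a i) ≠ 0} + #{i | f.eval (a i) = 0} = N := by
    rw [add_comm, card_filter_add_card_filter_not, card_univ, Fintype.card_fin]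
  rw [hammingNorm, card_filter, Fin.sum_univ_castSucc, add_right_comm]
  simp only [extendedGRSEncoder_castSucc, extendedGRSEncoder_last, mul_ne_zero_iff, hv, ne_eq,
    not_false_eq_true, true_and]
  rw [← card_filter, hN, ite_not]

lemma le_hammingNorm_extendedGRSEncoder_add [DecidableEq F] (ha : a.Injective)
    (hv : ∀ i, v i ≠ 0) {f : F[X]} (hf : f ∈ degreeLT F k) (hf₀ : f ≠ 0) :
    N + 2 ≤ hammingNorm (extendedGRSEncoder a v k f) + k := by
  have hnorm := hammingNorm_extendedGRSEncoder_add (a := a) (k := k) hv f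
  have hzeros := card_filter_eval_eq_zero_le_natDegree ha hf₀
  have hdeg := natDegree_lt_of_mem_degreeLT hf hf₀
  split_ifs at hnorm with hlead
  · have : f.natDegree ≠ k - 1 := by
      intro h
      rw [← h, coeff_natDegree, leadingCoeff_eq_zero] at hlead
      exact hf₀ hlead
    omega
  · omega

lemma extendedGRSEncoder_ne_zero (ha : a.Injective) (hv : ∀ i, v i ≠ 0)
    (hk : k ≤ N + 1) {f : F[X]} (hf : f ∈ degreeLT F k) (hf₀ : f ≠ 0) :
    extendedGRSEncoder a v k f ≠ 0 := by
  classical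
  have := le_hammingNorm_extendedGRSEncoder_add ha hv hf hf₀
  exact hammingNorm_pos_iff.1 (by omega)

lemma finrank_extendedGRSCode (ha : a.Injective) (hv : ∀ i, v i ≠ 0)
    (hk : k ≤ N + 1) : finrank F (extendedGRSCode a v k) = k := by
  have hinj : Function.Injective ((extendedGRSEncoder a v k).domRestrict (degreeLT F k)) := by
    refine (injective_iff_map_eq_zero _).2 fun f hf ↦ ?_
    by_contra hf₀
    exact extendedGRSEncoder_ne_zero ha hv hk f.2 (Submodule.coe_eq_zero.not.2 hf₀) hf
  rw [extendedGRSCode, ← LinearMap.range_domRestrict, LinearMap.finrank_range_of_inj hinj,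
    (degreeLTEquiv F k).finrank_eq, finrank_fin_fun]

lemma isMinDist_extendedGRSCode [DecidableEq F] (ha : a.Injective) (hv : ∀ i, v i ≠ 0)
    (hk₀ : 0 < k) (hk : k ≤ N + 1) : IsMinDist (extendedGRSCode a v k) (N + 2 - k) := by
  constructor
  · rintro _ ⟨f, hf, rfl⟩ hne
    have hf₀ : f ≠ 0 := by
      rintro rfl
      exact hne (map_zero _)
    have := le_hammingNorm_extendedGRSEncoder_add ha hv hf hf₀
    omega
  · -- a polynomial vanishing at `k - 1` of the evaluation points has minimum weight
    obtain ⟨s, -, hs⟩ := exists_subset_card_eq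
      (show k - 1 ≤ #(univ : Finset (Fin N)) by rw [card_univ, Fintype.card_fin]; omega)
    let f := Lagrange.nodal s a
    have hf₀ : f ≠ 0 := Lagrange.nodal_ne_zero
    have hf : f ∈ degreeLT F k := by
      rw [mem_degreeLT, Lagrange.degree_nodal, hs]
      exact_mod_cast Nat.sub_lt hk₀ one_pos
    have hzeros : k - 1 ≤ #{i | f.eval (a i) = 0} := hs ▸ card_le_card fun i hi ↦
      mem_filter.2 ⟨mem_univ i, Lagrange.eval_nodal_at_node hi⟩
    refine ⟨_, ⟨f, hf, rfl⟩, extendedGRSEncoder_ne_zero ha hv hk hf hf₀, ?_⟩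
    have hlower := le_hammingNorm_extendedGRSEncoder_add ha hv hf hf₀
    have hnorm := hammingNorm_extendedGRSEncoder_add (a := a) (k := k) hv f
    split_ifs at hnorm <;> omega

/-- By Lagrange interpolation, the sum of the first `N` products is minus the coefficient of
`X ^ (2 * k - 2)` in `f * g`, which the coordinate at infinity cancels. -/
lemma extendedGRSCode_le_dualCode (hk : N + 1 = 2 * k) (ha : a.Injective)
    (hv : ∀ i, v i ^ 2 = -(∏ j ∈ univ.erase i, (a i - a j))⁻¹) :
    extendedGRSCode a v k ≤ dualCode (extendedGRSCode a v k) := by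
  rintro _ ⟨f, hf, rfl⟩ _ ⟨g, hg, rfl⟩
  have hdeg {p : F[X]} (hp : p ∈ degreeLT F k) : p.natDegree ≤ k - 1 := by
    obtain rfl | hp₀ := eq_or_ne p 0
    · exact zero_le
    · exact Nat.le_pred_of_lt (natDegree_lt_of_mem_degreeLT hp hp₀)
  have hN : #(univ : Finset (Fin N)) = k - 1 + (k - 1) + 1 := by
    rw [card_univ, Fintype.card_fin]
    omega
  have hfg : (f * g).degree < #(univ : Finset (Fin N)) := by
    rw [hN]
    exact degree_lt_iff_coeff_zero _ _ |>.2 fun m hm ↦ coeff_eq_zero_of_natDegree_lt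
      ((natDegree_mul_le_of_le (hdeg hf) (hdeg hg)).trans_lt hm)
  have hcoeff := Lagrange.coeff_eq_sum ha.injOn hfg
  rw [hN, Nat.add_sub_cancel, coeff_mul_add_eq_of_natDegree_le (hdeg hf) (hdeg hg)] at hcoeff
  rw [Fin.sum_univ_castSucc, extendedGRSEncoder_last, extendedGRSEncoder_last, hcoeff,
    ← sum_add_distrib]
  refine sum_eq_zero fun i _ ↦ ?_
  rw [extendedGRSEncoder_castSucc, extendedGRSEncoder_castSucc, eval_mul, div_eq_mul_inv]
  linear_combination f.eval (a i) * g.eval (a i) * hv i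

lemma isMDSSelfDual_extendedGRSCode [DecidableEq F] (hk : N + 1 = 2 * k) (ha : a.Injective)
    (hv : ∀ i, v i ^ 2 = -(∏ j ∈ univ.erase i, (a i - a j))⁻¹) :
    IsMDSSelfDual (extendedGRSCode a v k) := by
  have hv₀ (i : Fin N) : v i ≠ 0 := by
    refine pow_ne_zero_iff two_ne_zero |>.1 ?_
    rw [hv]
    refine neg_ne_zero.2 (inv_ne_zero (prod_ne_zero_iff.2 ?_))
    exact fun j hj ↦ sub_ne_zero.2 (ha.ne (ne_of_mem_erase hj).symm)
  have hrank : finrank F (extendedGRSCode a v k) = k :=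
    finrank_extendedGRSCode ha hv₀ (by omega)
  have hhalf : (N + 1) / 2 = k := by omega
  refine ⟨(Submodule.eq_of_le_of_finrank_eq (extendedGRSCode_le_dualCode hk ha hv) ?_).symm,
    hrank.trans hhalf.symm, ?_⟩
  · rw [finrank_dualCode, hrank]
    omega
  · convert isMinDist_extendedGRSCode ha hv₀ (by omega : 0 < k) (by omega) using 1
    omega

end ExtendedGRS

lemma exists_isMDSSelfDual_of_isSquare_neg_prod [DecidableEq F] (S : Finset F) (hodd : Odd #S)
    (hS : ∀ x ∈ S, IsSquare (-∏ y ∈ S.erase x, (x - y))) :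
    ∃ C : Submodule F (Fin (#S + 1) → F), IsMDSSelfDual C := by
  obtain ⟨k, hk⟩ := hodd
  let e : Fin #S ≃ S := S.equivFin.symm
  have ha : Function.Injective fun i ↦ (e i : F) := Subtype.val_injective.comp e.injective
  have hprod (i : Fin #S) :
      ∏ j ∈ univ.erase i, ((e i : F) - e j) = ∏ y ∈ S.erase (e i), ((e i : F) - y) := by
    refine prod_nbij (fun j ↦ (e j : F)) (fun j hj ↦ ?_) ha.injOn (fun y hy ↦ ?_) fun _ _ ↦ rfl
    · exact mem_erase.2 ⟨ha.ne (ne_of_mem_erase hj), (e j).2⟩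
    · obtain ⟨hne, hy⟩ := mem_erase.1 (mem_coe.1 hy)
      obtain ⟨j, hj⟩ := e.surjective ⟨y, hy⟩
      obtain rfl : (e j : F) = y := by rw [hj]
      exact ⟨j, mem_erase.2 ⟨fun h ↦ hne (h ▸ rfl), mem_univ j⟩, rfl⟩
  choose v hv using fun i ↦ hS (e i) (e i).2
  refine ⟨_, isMDSSelfDual_extendedGRSCode (v := fun i ↦ (v i)⁻¹) (k := k + 1) (by omega) ha
    fun i ↦ ?_⟩
  rw [hprod, inv_pow, sq, ← hv, inv_neg]

lemma exists_isMDSSelfDual_of_splits [DecidableEq F] {P : F[X]} (hmonic : P.Monic)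
    (hsplits : P.Splits) (hdeg : P.natDegree = N) (hodd : Odd N)
    (hroot : ∀ x, P.IsRoot x →
      P.derivative.eval x ≠ 0 ∧ IsSquare (-P.derivative.eval x)) :
    ∃ C : Submodule F (Fin (N + 1) → F), IsMDSSelfDual C := by
  have hnodup : P.roots.Nodup := by
    refine Multiset.nodup_iff_count_le_one.2 fun x ↦ not_lt.1 fun hx ↦ ?_
    rw [count_roots, one_lt_rootMultiplicity_iff_isRoot hmonic.ne_zero] at hx
    exact (hroot x hx.1).1 hx.2
  have hnodal : Lagrange.nodal P.roots.toFinset id = P := by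
    conv_rhs => rw [hsplits.eq_prod_roots_of_monic hmonic, ← hnodup.dedup, ← Multiset.toFinset_val]
    rfl
  have hcard : #P.roots.toFinset = N := by
    rw [← hdeg, ← Lagrange.natDegree_nodal (v := (id : F → F)), hnodal]
  subst hcard
  refine exists_isMDSSelfDual_of_isSquare_neg_prod _ hodd fun x hx ↦ ?_
  have hderiv := Lagrange.eval_nodal_derivative_eval_node_eq (v := id) hx
  rw [hnodal, Lagrange.eval_nodal] at hderiv
  rw [id] at hderiv
  exact hderiv ▸ (hroot x (isRoot_of_mem_roots (Multiset.mem_toFinset.1 hx))).2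

section FiniteField

variable [Fintype F] {r k : ℕ}

lemma exists_ringHom_eq_pow (hr : r ∣ Fintype.card F) : ∃ φ : F →+* F, ∀ x, φ x = x ^ r := by
  obtain ⟨p, _⟩ := CharP.exists F
  obtain ⟨n, hp, hcard⟩ := FiniteField.card F p
  have : Fact p.Prime := ⟨hp⟩
  obtain ⟨k, -, rfl⟩ := (Nat.dvd_prime_pow hp).1 (hcard ▸ hr)
  exact ⟨iterateFrobenius F p k, iterateFrobenius_def p k⟩

lemma sub_pow_mul_mul_of_pow_succ_eq_one (hr : r ∣ Fintype.card F) {x y : F}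
    (hx : x ^ (r + 1) = 1) (hy : y ^ (r + 1) = 1) : (x - y) ^ r * (x * y) = -(x - y) := by
  obtain ⟨φ, hφ⟩ := exists_ringHom_eq_pow hr
  rw [← hφ, map_sub, hφ, hφ]
  linear_combination y * hx - x * hy

lemma quadraticChar_eq_one_of_pow_eq_one [DecidableEq F] (hk : 2 * k ∣ Fintype.card F - 1) {x : F}
    (hx : x ^ k = 1) : quadraticChar F x = 1 := by
  have hcard := Fintype.one_lt_card (α := F)
  obtain ⟨j, hj⟩ := hk
  rw [mul_assoc] at hj
  have hx₀ : x ≠ 0 := by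
    rintro rfl
    obtain rfl : k = 0 := by
      by_contra hk₀
      exact zero_ne_one ((zero_pow hk₀).symm.trans hx)
    omega
  have hchar : ringChar F ≠ 2 := by
    rw [Ne, FiniteField.even_card_iff_char_two]
    omega
  have hhalf : Fintype.card F / 2 = k * j := by omega
  rw [quadraticChar_one_iff_isSquare hx₀, FiniteField.isSquare_iff hchar hx₀, hhalf, pow_mul, hx,
    one_pow]

lemma natCast_ne_zero_of_dvd_card_sub_one {n : ℕ} (hn : n ∣ Fintype.card F - 1) : (n : F) ≠ 0 := by
  intro h
  obtain ⟨j, hj⟩ := hn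
  have hcard : Fintype.card F = n * j + 1 := by
    have := Fintype.one_lt_card (α := F); omega
  have := FiniteField.cast_card_eq_zero F
  rw [hcard] at this
  simp [h] at this

lemma X_pow_sub_C_dvd_X_pow_card_sub_X {n : ℕ} (hn : n * k = Fintype.card F - 1) {c : F}
    (hc : c ^ k = 1) : (X ^ n - C c : F[X]) ∣ X ^ Fintype.card F - X := by
  have hcard : Fintype.card F = n * k + 1 := by
    have := Fintype.one_lt_card (α := F); omega
  have hdvd : (X ^ n - C c : F[X]) ∣ (X ^ n) ^ k - C c ^ k := sub_dvd_pow_sub_pow _ _ _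
  rw [← C_pow, hc, C_1, ← pow_mul] at hdvd
  rw [hcard, pow_succ, ← sub_one_mul]
  exact hdvd.mul_right X

lemma splits_X_pow_sub_C {n : ℕ} (hn : n * k = Fintype.card F - 1) {c : F} (hc : c ^ k = 1) :
    (X ^ n - C c).Splits := by
  have hsplits : (X ^ Fintype.card F - X : F[X]).Splits := by
    rw [splits_iff_card_roots, FiniteField.roots_X_pow_card_sub_X,
      FiniteField.X_pow_card_sub_X_natDegree_eq F Fintype.one_lt_card]
    rfl
  exact hsplits.of_dvd (FiniteField.X_pow_card_sub_X_ne_zero F Fintype.one_lt_card)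
    (X_pow_sub_C_dvd_X_pow_card_sub_X hn hc)

lemma exists_finset_forall_pow_eq {n s : ℕ} (hn : n * k = Fintype.card F - 1) {c : F}
    (hc : c ^ k = 1) (hs : s ≤ n) : ∃ S : Finset F, #S = s ∧ ∀ x ∈ S, x ^ n = c := by
  classical
  have hnodup : (X ^ n - C c).roots.Nodup := by
    refine Multiset.nodup_of_le (roots.le_of_dvd
      (FiniteField.X_pow_card_sub_X_ne_zero F Fintype.one_lt_card)
      (X_pow_sub_C_dvd_X_pow_card_sub_X hn hc)) ?_
    rw [FiniteField.roots_X_pow_card_sub_X]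
    exact univ.nodup
  have hcard : #(X ^ n - C c).roots.toFinset = n := by
    rw [Multiset.toFinset_card_of_nodup hnodup,
      ← (splits_X_pow_sub_C hn hc).natDegree_eq_card_roots, natDegree_X_pow_sub_C]
  obtain ⟨S, hS, rfl⟩ := exists_subset_card_eq (hs.trans_eq hcard.symm)
  refine ⟨S, rfl, fun x hx ↦ ?_⟩
  have := isRoot_of_mem_roots (Multiset.mem_toFinset.1 (hS hx))
  simpa [sub_eq_zero] using this

end FiniteField

section QuadraticCharacter

variable [Fintype F] {r R k : ℕ} {S D : Finset F} {x y : F}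

lemma ringChar_ne_two_of_odd (hF : Fintype.card F = r ^ 2) (hr : Odd r) : ringChar F ≠ 2 := by
  rw [Ne, FiniteField.even_card_iff_char_two, hF, ← Nat.even_iff, Nat.not_even_iff_odd]
  exact hr.pow

variable [DecidableEq F]

lemma quadraticChar_eq_one_of_pow_eq_self (hF : Fintype.card F = r ^ 2) (hr : Odd r)
    (hx₀ : x ≠ 0) (hx : x ^ r = x) : quadraticChar F x = 1 := by
  obtain ⟨j, rfl⟩ := hr
  refine quadraticChar_eq_one_of_pow_eq_one (k := 2 * j) ⟨j + 1, ?_⟩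
    (mul_right_cancel₀ hx₀ (by rw [← pow_succ, hx, one_mul]))
  rw [hF]
  exact Nat.sub_eq_of_eq_add (by ring)

lemma quadraticChar_eq_one_of_pow_succ_eq_one (hF : Fintype.card F = r ^ 2) (hr : Odd r)
    (hx : x ^ (r + 1) = 1) : quadraticChar F x = 1 := by
  obtain ⟨j, rfl⟩ := hr
  refine quadraticChar_eq_one_of_pow_eq_one ⟨j, ?_⟩ hx
  rw [hF]
  exact Nat.sub_eq_of_eq_add (by ring)

lemma quadraticChar_natCast_eq_one (hF : Fintype.card F = r ^ 2) (hr : Odd r) {n : ℕ}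
    (hn : (n : F) ≠ 0) : quadraticChar F n = 1 := by
  obtain ⟨φ, hφ⟩ := exists_ringHom_eq_pow (hF ▸ dvd_pow_self r two_ne_zero)
  exact quadraticChar_eq_one_of_pow_eq_self hF hr hn (by rw [← hφ, map_natCast])

/-- Since `(x - y) ^ (r - 1) * (x * y) = -1`, Euler's criterion turns the character of `x - y` into
the `R`-th power of `x * y`. -/
lemma quadraticChar_sub_of_pow_succ_eq_one (hF : Fintype.card F = r ^ 2) (hR : r + 1 = 2 * R)
    (hx : x ^ (r + 1) = 1) (hy : y ^ (r + 1) = 1) (hxy : x ≠ y) (hk : (x * y) ^ R = (-1) ^ k) :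
    quadraticChar F (x - y) = (-1) ^ (R + k) := by
  have hsub : x - y ≠ 0 := sub_ne_zero.2 hxy
  have hr : r - 1 + 1 = r := by
    have : r ≠ 0 := by
      rintro rfl
      exact Fintype.card_ne_zero hF
    omega
  have hchar : ringChar F ≠ 2 := ringChar_ne_two_of_odd hF (Nat.odd_iff.2 (by omega))
  have hhalf : Fintype.card F / 2 = (r - 1) * R := by
    obtain ⟨i, rfl⟩ : ∃ i, R = i + 1 := ⟨R - 1, by omega⟩
    obtain rfl : r = 2 * i + 1 := by omega
    rw [hF, show (2 * i + 1) ^ 2 = 2 * (2 * i * (i + 1)) + 1 by ring, Nat.add_sub_cancel]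
    omega
  have hnorm : (x - y) ^ (r - 1) * (x * y) = -1 := by
    refine mul_left_cancel₀ hsub ?_
    rw [← mul_assoc, ← pow_succ', hr, sub_pow_mul_mul_of_pow_succ_eq_one
      (hF ▸ dvd_pow_self r two_ne_zero) hx hy, mul_neg_one]
  have heuler : (x - y) ^ (Fintype.card F / 2) = (-1) ^ (R + k) := by
    have hpow : ((x - y) ^ (r - 1)) ^ R * (-1) ^ k = (-1) ^ R := by rw [← hk, ← mul_pow, hnorm]
    rw [hhalf, pow_mul, pow_add, ← hpow, mul_assoc, ← mul_pow, neg_one_mul, neg_neg, one_pow,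
      mul_one]
  rw [quadraticChar_eq_pow_of_char_ne_two hchar hsub, heuler]
  obtain h | h := Nat.even_or_odd (R + k)
  · simp [h.neg_one_pow]
  · simp [h.neg_one_pow, Ring.neg_one_ne_one_of_char_ne_two hchar]

lemma quadraticChar_prod_sub_eq_one_of_pow_eq_self (hF : Fintype.card F = r ^ 2) (hr : Odd r)
    (hS : ∀ c ∈ S, c ^ r = c) (hy : y ^ r = y) (hyS : y ∉ S) :
    quadraticChar F (∏ c ∈ S, (y - c)) = 1 := by
  obtain ⟨φ, hφ⟩ := exists_ringHom_eq_pow (hF ▸ dvd_pow_self r two_ne_zero)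
  rw [map_prod]
  refine prod_eq_one fun c hc ↦ quadraticChar_eq_one_of_pow_eq_self hF hr ?_ ?_
  · exact sub_ne_zero.2 (ne_of_mem_of_not_mem hc hyS).symm
  · rw [← hφ, map_sub, hφ, hφ, hy, hS c hc]

lemma quadraticChar_prod_sub_of_pow_succ_eq_one (hF : Fintype.card F = r ^ 2)
    (hR : r + 1 = 2 * R) (hD : ∀ d ∈ D, d ^ (r + 1) = 1) (hy : y ^ (r + 1) = 1) (hyD : y ∉ D)
    (hk : ∀ d ∈ D, (y * d) ^ R = (-1) ^ k) :
    quadraticChar F (∏ d ∈ D, (y - d)) = (-1) ^ ((R + k) * #D) := by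
  rw [map_prod, prod_congr rfl fun d hd ↦ quadraticChar_sub_of_pow_succ_eq_one hF hR hy (hD d hd)
    (ne_of_mem_of_not_mem hd hyD).symm (hk d hd), prod_const, pow_mul]

end QuadraticCharacter

/-- The polynomial `∏ c ∈ S, (X ^ f - c)`, whose roots are the `f`-th roots of the elements
of `S`. -/
noncomputable def prodXPowSubC (S : Finset F) (f : ℕ) : F[X] :=
  ∏ c ∈ S, (X ^ f - C c)

section ProdXPowSubC

variable {S : Finset F} {f : ℕ} {x : F}

lemma eval_prodXPowSubC : (prodXPowSubC S f).eval x = ∏ c ∈ S, (x ^ f - c) := by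
  simp [prodXPowSubC, eval_prod]

lemma isRoot_prodXPowSubC : (prodXPowSubC S f).IsRoot x ↔ x ^ f ∈ S := by
  simp [IsRoot, eval_prodXPowSubC, prod_eq_zero_iff, sub_eq_zero]

lemma monic_prodXPowSubC (hf : f ≠ 0) : (prodXPowSubC S f).Monic :=
  monic_prod_of_monic _ _ fun c _ ↦ monic_X_pow_sub_C c hf

lemma natDegree_prodXPowSubC (hf : f ≠ 0) : (prodXPowSubC S f).natDegree = #S * f := by
  rw [prodXPowSubC, natDegree_prod_of_monic _ _ fun c _ ↦ monic_X_pow_sub_C c hf]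
  simp

lemma splits_prodXPowSubC [Fintype F] {k : ℕ} (hf : f * k = Fintype.card F - 1)
    (hS : ∀ c ∈ S, c ^ k = 1) : (prodXPowSubC S f).Splits :=
  Splits.prod fun c hc ↦ splits_X_pow_sub_C hf (hS c hc)

lemma mul_eval_derivative_prodXPowSubC [DecidableEq F] (hx : x ^ f ∈ S) :
    x * (prodXPowSubC S f).derivative.eval x = f * x ^ f * ∏ c ∈ S.erase (x ^ f), (x ^ f - c) := by
  have hexpand : prodXPowSubC S f = expand F f (Lagrange.nodal S id) := by
    simp [prodXPowSubC, Lagrange.nodal_eq, map_prod]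
  have hnode := Lagrange.eval_nodal_derivative_eval_node_eq (v := id) hx
  rw [Lagrange.eval_nodal] at hnode
  simp only [id] at hnode
  rw [hexpand, derivative_expand, eval_mul, expand_eval, hnode]
  rcases f with _ | f
  · simp
  · simp only [eval_mul, eval_natCast, eval_pow, eval_X, Nat.add_sub_cancel]
    ring

end ProdXPowSubC

lemma pow_succ_eq_one_of_pow_eq_neg_one {r n L : ℕ} {A : Type*} [Ring A] {x : A}
    (hR : r + 1 = 2 * (n * L)) (hx : x ^ n = -1) : x ^ (r + 1) = 1 := by
  rw [hR, pow_mul', pow_mul, hx, pow_right_comm, neg_one_sq, one_pow]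

section NormOne

variable [Fintype F] [DecidableEq F] {r n L f : ℕ} {D : Finset F} {x : F}

lemma quadraticChar_eval_prodXPowSubC_of_pow_pow_eq_one (hF : Fintype.card F = r ^ 2)
    (hR : r + 1 = 2 * (n * L)) (hD : ∀ d ∈ D, d ^ n = -1) (hx : (x ^ f) ^ n = 1)
    (hxD : x ^ f ∉ D) (heven : Even ((n * L + L) * #D)) :
    quadraticChar F ((prodXPowSubC D f).eval x) = 1 := by
  have hxL : (x ^ f) ^ (n * L) = 1 := by rw [pow_mul, hx, one_pow]
  rw [eval_prodXPowSubC, quadraticChar_prod_sub_of_pow_succ_eq_one (k := L) hF hR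
    (fun d hd ↦ pow_succ_eq_one_of_pow_eq_neg_one hR (hD d hd)) ?_ hxD fun d hd ↦ ?_,
    heven.neg_one_pow]
  · rw [hR, pow_mul', hxL, one_pow]
  · rw [mul_pow, hxL, one_mul, pow_mul, hD d hd]

lemma quadraticChar_mul_eval_derivative_prodXPowSubC_of_pow_eq_neg_one
    (hF : Fintype.card F = r ^ 2) (hR : r + 1 = 2 * (n * L)) (hf : (f : F) ≠ 0)
    (hD : ∀ d ∈ D, d ^ n = -1) (hx : x ^ f ∈ D) (heven : Even (n * L * (#D - 1))) :
    quadraticChar F (x * (prodXPowSubC D f).derivative.eval x) = 1 := by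
  have hr : Odd r := Nat.odd_iff.2 (by omega)
  have hnorm : ∀ d ∈ D, d ^ (r + 1) = 1 := fun d hd ↦
    pow_succ_eq_one_of_pow_eq_neg_one hR (hD d hd)
  rw [mul_eval_derivative_prodXPowSubC hx, map_mul, map_mul, quadraticChar_natCast_eq_one hF hr hf,
    quadraticChar_eq_one_of_pow_succ_eq_one hF hr (hnorm _ hx),
    quadraticChar_prod_sub_of_pow_succ_eq_one (k := 0) hF hR
      (fun d hd ↦ hnorm d (mem_of_mem_erase hd)) (hnorm _ hx) (notMem_erase _ _) fun d hd ↦ ?_,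
    card_erase_of_mem hx, add_zero, heven.neg_one_pow, one_mul, one_mul]
  rw [pow_mul, mul_pow, hD _ hx, hD d (mem_of_mem_erase hd), neg_one_mul, neg_neg, one_pow,
    pow_zero]

lemma quadraticChar_eval_zero_prodXPowSubC (hF : Fintype.card F = r ^ 2) (hr : Odd r)
    (hf : f ≠ 0) (hD : ∀ d ∈ D, d ^ (r + 1) = 1) :
    quadraticChar F ((prodXPowSubC D f).eval 0) = 1 := by
  rw [eval_prodXPowSubC, map_prod]
  refine prod_eq_one fun d hd ↦ quadraticChar_eq_one_of_pow_succ_eq_one hF hr ?_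
  rw [zero_pow hf, zero_sub, hr.add_one.neg_pow, hD d hd]

end NormOne

section FixedBySubfield

variable [Fintype F] [DecidableEq F] {r f : ℕ} {S : Finset F} {x : F}

lemma quadraticChar_eval_prodXPowSubC_of_pow_eq_self (hF : Fintype.card F = r ^ 2) (hr : Odd r)
    (hS : ∀ c ∈ S, c ^ r = c) (hx : (x ^ f) ^ r = x ^ f) (hxS : x ^ f ∉ S) :
    quadraticChar F ((prodXPowSubC S f).eval x) = 1 := by
  rw [eval_prodXPowSubC, quadraticChar_prod_sub_eq_one_of_pow_eq_self hF hr hS hx hxS]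

lemma quadraticChar_mul_eval_derivative_prodXPowSubC_of_pow_eq_self
    (hF : Fintype.card F = r ^ 2) (hr : Odd r) (hf : (f : F) ≠ 0) (hS : ∀ c ∈ S, c ^ r = c)
    (hS₀ : 0 ∉ S) (hx : x ^ f ∈ S) :
    quadraticChar F (x * (prodXPowSubC S f).derivative.eval x) = 1 := by
  rw [mul_eval_derivative_prodXPowSubC hx, map_mul, map_mul, quadraticChar_natCast_eq_one hF hr hf,
    quadraticChar_eq_one_of_pow_eq_self hF hr (ne_of_mem_of_not_mem hx hS₀) (hS _ hx),
    quadraticChar_prod_sub_eq_one_of_pow_eq_self hF hr (fun c hc ↦ hS c (mem_of_mem_erase hc))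
      (hS _ hx) (notMem_erase _ _), one_mul, one_mul]

end FixedBySubfield

lemma pow_eq_self_of_pow_eq_one {M : Type*} [Monoid M] {r m : ℕ} (hr : r ≠ 0) (hm : m ∣ r - 1)
    {x : M} (hx : x ^ m = 1) : x ^ r = x := by
  obtain ⟨j, hj⟩ := hm
  rw [← Nat.sub_add_cancel (Nat.one_le_iff_ne_zero.2 hr), hj, pow_succ, pow_mul, hx, one_pow,
    one_mul]

/-- The polynomial `X * ∏ c ∈ S, (X ^ f₁ - c) * ∏ d ∈ D, (X ^ f₂ - d)`, whose roots are the
evaluation points of the code. -/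
noncomputable def locator (S D : Finset F) (f₁ f₂ : ℕ) : F[X] :=
  X * (prodXPowSubC S f₁ * prodXPowSubC D f₂)

section Locator

variable {S D : Finset F} {f₁ f₂ : ℕ} {x : F}

lemma isRoot_locator : (locator S D f₁ f₂).IsRoot x ↔ x = 0 ∨ x ^ f₁ ∈ S ∨ x ^ f₂ ∈ D := by
  rw [locator, root_mul, root_mul, isRoot_prodXPowSubC, isRoot_prodXPowSubC, IsRoot, eval_X]

lemma eval_derivative_locator : (locator S D f₁ f₂).derivative.eval x =
    (prodXPowSubC S f₁).eval x * (prodXPowSubC D f₂).eval x +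
      x * (prodXPowSubC S f₁).derivative.eval x * (prodXPowSubC D f₂).eval x +
      x * (prodXPowSubC D f₂).derivative.eval x * (prodXPowSubC S f₁).eval x := by
  simp only [locator, derivative_mul, derivative_X, eval_add, eval_mul, eval_X, eval_one]
  ring

lemma eval_zero_derivative_locator : (locator S D f₁ f₂).derivative.eval 0 =
    (prodXPowSubC S f₁).eval 0 * (prodXPowSubC D f₂).eval 0 := by
  simp [eval_derivative_locator]

lemma eval_derivative_locator_of_pow_mem_left (hx : x ^ f₁ ∈ S) :
    (locator S D f₁ f₂).derivative.eval x =
      x * (prodXPowSubC S f₁).derivative.eval x * (prodXPowSubC D f₂).eval x := by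
  simp [eval_derivative_locator, (isRoot_prodXPowSubC.2 hx).eq_zero]

lemma eval_derivative_locator_of_pow_mem_right (hx : x ^ f₂ ∈ D) :
    (locator S D f₁ f₂).derivative.eval x =
      x * (prodXPowSubC D f₂).derivative.eval x * (prodXPowSubC S f₁).eval x := by
  simp [eval_derivative_locator, (isRoot_prodXPowSubC.2 hx).eq_zero]

lemma splits_locator [Fintype F] {k₁ k₂ : ℕ} (hk₁ : f₁ * k₁ = Fintype.card F - 1)
    (hk₂ : f₂ * k₂ = Fintype.card F - 1) (hS : ∀ c ∈ S, c ^ k₁ = 1) (hD : ∀ d ∈ D, d ^ k₂ = 1) :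
    (locator S D f₁ f₂).Splits :=
  Splits.X.mul ((splits_prodXPowSubC hk₁ hS).mul (splits_prodXPowSubC hk₂ hD))

lemma monic_locator (hf₁ : f₁ ≠ 0) (hf₂ : f₂ ≠ 0) : (locator S D f₁ f₂).Monic :=
  monic_X.mul ((monic_prodXPowSubC hf₁).mul (monic_prodXPowSubC hf₂))

lemma natDegree_locator (hf₁ : f₁ ≠ 0) (hf₂ : f₂ ≠ 0) :
    (locator S D f₁ f₂).natDegree = #S * f₁ + #D * f₂ + 1 := by
  have hS := monic_prodXPowSubC (S := S) hf₁
  have hD := monic_prodXPowSubC (S := D) hf₂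
  rw [locator, monic_X.natDegree_mul (hS.mul hD), hS.natDegree_mul hD, natDegree_X,
    natDegree_prodXPowSubC hf₁, natDegree_prodXPowSubC hf₂, add_comm]

variable [Fintype F] [DecidableEq F] {r m n L : ℕ}

lemma quadraticChar_eval_derivative_locator (hF : Fintype.card F = r ^ 2) (hm : 2 * m ∣ r - 1)
    (hR : r + 1 = 2 * (n * L)) (hf : f₁ * m = f₂ * n) (hf₁ : (f₁ : F) ≠ 0) (hf₂ : (f₂ : F) ≠ 0)
    (hS : ∀ c ∈ S, c ^ m = 1) (hD : ∀ d ∈ D, d ^ n = -1) (hL : Even ((n * L + L) * #D))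
    (hn : Even (n * L * (#D - 1))) (hx : (locator S D f₁ f₂).IsRoot x) :
    quadraticChar F ((locator S D f₁ f₂).derivative.eval x) = 1 := by
  have hr : Odd r := Nat.odd_iff.2 (by omega)
  have hne : (-1 : F) ≠ 1 := Ring.neg_one_ne_one_of_char_ne_two (ringChar_ne_two_of_odd hF hr)
  have hfix {y : F} (hy : (y ^ m) ^ 2 = 1) : y ^ r = y :=
    pow_eq_self_of_pow_eq_one hr.pos.ne' hm (by rw [pow_mul', hy])
  have hSr : ∀ c ∈ S, c ^ r = c := fun c hc ↦ hfix (by rw [hS c hc, one_pow])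
  have hS₀ : (0 : F) ∉ S := by
    intro h
    obtain rfl : m = 0 := by
      by_contra hm₀
      exact zero_ne_one ((zero_pow hm₀).symm.trans (hS 0 h))
    have : 1 < r ^ 2 := hF ▸ Fintype.one_lt_card
    obtain rfl : r = 1 := by rw [mul_zero, zero_dvd_iff] at hm; omega
    simp at this
  have hpow : (x ^ f₁) ^ m = (x ^ f₂) ^ n := by rw [← pow_mul, ← pow_mul, hf]
  obtain rfl | hxS | hxD := isRoot_locator.1 hx
  · have hf₁' : f₁ ≠ 0 := by rintro rfl; simp at hf₁
    have hf₂' : f₂ ≠ 0 := by rintro rfl; simp at hf₂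
    rw [eval_zero_derivative_locator, map_mul,
      quadraticChar_eval_prodXPowSubC_of_pow_eq_self hF hr hSr
        (by rw [zero_pow hf₁', zero_pow hr.pos.ne']) (by rwa [zero_pow hf₁']),
      quadraticChar_eval_zero_prodXPowSubC hF hr hf₂'
        fun d hd ↦ pow_succ_eq_one_of_pow_eq_neg_one hR (hD d hd), one_mul]
  · have hxn : (x ^ f₂) ^ n = 1 := hpow.symm.trans (hS _ hxS)
    have hxD : x ^ f₂ ∉ D := fun h ↦ hne ((hD _ h).symm.trans hxn)
    rw [eval_derivative_locator_of_pow_mem_left hxS, map_mul,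
      quadraticChar_mul_eval_derivative_prodXPowSubC_of_pow_eq_self hF hr hf₁ hSr hS₀ hxS,
      quadraticChar_eval_prodXPowSubC_of_pow_pow_eq_one hF hR hD hxn hxD hL, one_mul]
  · have hxm : (x ^ f₁) ^ m = -1 := hpow.trans (hD _ hxD)
    have hxS : x ^ f₁ ∉ S := fun h ↦ hne (hxm.symm.trans (hS _ h))
    rw [eval_derivative_locator_of_pow_mem_right hxD, map_mul,
      quadraticChar_mul_eval_derivative_prodXPowSubC_of_pow_eq_neg_one hF hR hf₂ hD hxD hn,
      quadraticChar_eval_prodXPowSubC_of_pow_eq_self hF hr hSr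
        (hfix (by rw [hxm, neg_one_sq])) hxS, one_mul]

theorem exists_isMDSSelfDual_of_pow_eq_one_of_pow_eq_neg_one (hF : Fintype.card F = r ^ 2)
    (hm : 2 * m ∣ r - 1) (hR : r + 1 = 2 * (n * L)) (hf : f₁ * m = f₂ * n)
    (hcard : 2 * (f₁ * m) ∣ Fintype.card F - 1) (hS : ∀ c ∈ S, c ^ m = 1)
    (hD : ∀ d ∈ D, d ^ n = -1) (hL : Even ((n * L + L) * #D)) (hn : Even (n * L * (#D - 1)))
    (hlen : Even (#S * f₁ + #D * f₂)) :
    ∃ C : Submodule F (Fin (#S * f₁ + #D * f₂ + 2) → F), IsMDSSelfDual C := by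
  have hr : Odd r := Nat.odd_iff.2 (by omega)
  obtain ⟨j, hj⟩ := hcard
  have hk₁ : f₁ * (m * (2 * j)) = Fintype.card F - 1 := by rw [hj]; ring
  have hk₂ : f₂ * (n * (2 * j)) = Fintype.card F - 1 := by rw [hj, hf]; ring
  have hf₁ : (f₁ : F) ≠ 0 := natCast_ne_zero_of_dvd_card_sub_one ⟨_, hk₁.symm⟩
  have hf₂ : (f₂ : F) ≠ 0 := natCast_ne_zero_of_dvd_card_sub_one ⟨_, hk₂.symm⟩
  have hf₁' : f₁ ≠ 0 := by rintro rfl; simp at hf₁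
  have hf₂' : f₂ ≠ 0 := by rintro rfl; simp at hf₂
  have hsplits : (locator S D f₁ f₂).Splits := splits_locator hk₁ hk₂
    (fun c hc ↦ by rw [pow_mul, hS c hc, one_pow])
    (fun d hd ↦ by rw [pow_mul, hD d hd, pow_mul, neg_one_sq, one_pow])
  refine exists_isMDSSelfDual_of_splits (monic_locator hf₁' hf₂') hsplits
    (natDegree_locator hf₁' hf₂') hlen.add_one fun x hx ↦ ?_
  have hchar := quadraticChar_eval_derivative_locator hF hm hR hf hf₁ hf₂ hS hD hL hn hx
  have hne : (locator S D f₁ f₂).derivative.eval x ≠ 0 := by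
    intro h
    rw [h, quadraticChar_zero] at hchar
    exact zero_ne_one hchar
  refine ⟨hne, (quadraticChar_one_iff_isSquare (neg_ne_zero.2 hne)).1 ?_⟩
  rw [← neg_one_mul, map_mul, hchar, mul_one]
  exact quadraticChar_eq_one_of_pow_eq_self hF hr (neg_ne_zero.2 one_ne_zero) hr.neg_one_pow

end Locator

end

lemma odd_div_gcd_of_mod_two_pow_succ_eq {a b l : ℕ} (ha : a % 2 ^ (l + 1) = 2 ^ l)
    (hb : 2 ^ l ∣ b) : Odd (a / a.gcd b) := by
  have hdiv := Nat.div_add_mod a (2 ^ (l + 1))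
  have hal : a = 2 ^ l * (2 * (a / 2 ^ (l + 1)) + 1) := by
    rw [ha, pow_succ] at hdiv
    rw [pow_succ]
    linarith
  obtain ⟨w, hw⟩ : 2 ^ l ∣ a.gcd b := Nat.dvd_gcd ⟨_, hal⟩ hb
  have hodd : w * (a / a.gcd b) = 2 * (a / 2 ^ (l + 1)) + 1 := by
    refine Nat.eq_of_mul_eq_mul_left (Nat.two_pow_pos l) ?_
    rw [← hal, ← mul_assoc, ← hw, Nat.mul_div_cancel' (Nat.gcd_dvd_left a b)]
  exact (Nat.odd_mul.1 (hodd ▸ odd_two_mul_add_one _)).2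

lemma even_add_mul_of_even_div_add_div {g m n L r t : ℕ} (hm : Odd m) (hgn : 0 < n * g)
    (hr : r + 1 = 2 * (n * L))
    (heven : Even (t * (m * g) * (r + 1) / (2 * (n * g)) + t * (r + 1) / 2)) :
    Even ((n * L + L) * t) := by
  have hfst : t * (m * g) * (r + 1) / (2 * (n * g)) = t * m * L :=
    Nat.div_eq_of_eq_mul_left (by omega) (by rw [hr]; ring)
  have hsnd : t * (r + 1) / 2 = t * (n * L) :=
    Nat.div_eq_of_eq_mul_left two_pos (by rw [hr]; ring)
  rw [hfst, hsnd] at heven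
  grind

lemma two_mul_dvd_of_two_mul_mul_dvd_mul {g m n a : ℕ} (hg : 0 < g) (hm : Odd m)
    (hmn : m.Coprime n) (h : 2 * (n * g) ∣ m * g * a) : 2 * n ∣ a := by
  refine (Nat.Coprime.mul_left hm.coprime_two_left hmn.symm).dvd_of_dvd_mul_left
    (Nat.dvd_of_mul_dvd_mul_right hg ?_)
  rwa [mul_right_comm m, mul_assoc 2]

theorem mds_self_dual_thm3_even_length_add_two_general (r e1 f1 e2 f2 s t : ℕ)
    (hq1 : r ^ 2 - 1 = e1 * f1) (hq2 : r ^ 2 - 1 = e2 * f2)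
    (hgcd : Even (Nat.gcd e1 e2)) (hodd : Odd (e1 / Nat.gcd e1 e2))
    (hdvd1 : 2 * e2 ∣ e1 * (r + 1)) (hdvd2 : e1 ∣ e2 * (r - 1))
    (hs : s ≤ e1 / Nat.gcd e1 e2) (ht : t ≤ e2 / Nat.gcd e1 e2)
    (heven : Even (t * e1 * (r + 1) / (2 * e2) + t * (r + 1) / 2))
    (h4 : 4 ∣ (t - 1) * (r + 1)) (hn1 : Even (s * f1 + t * f2))
    (F : Type*) [Field F] [Fintype F] [DecidableEq F] (hF : Fintype.card F = r ^ 2) :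
    ∃ C : Submodule F (Fin (s * f1 + t * f2 + 2) → F), IsMDSSelfDual C := by
  have hr₁ : 1 < r ^ 2 := hF ▸ Fintype.one_lt_card
  have he1 : 0 < e1 := Nat.pos_of_ne_zero (by rintro rfl; omega)
  have he2 : 0 < e2 := Nat.pos_of_ne_zero (by rintro rfl; omega)
  obtain ⟨g, m, n, hg, hmn, rfl, rfl⟩ := Nat.exists_coprime' (Nat.gcd_pos_of_pos_left e2 he1)
  rw [Nat.gcd_mul_right, hmn.gcd_eq_one, one_mul] at hgcd
  rw [Nat.gcd_mul_right, hmn.gcd_eq_one, one_mul, Nat.mul_div_cancel _ hg] at hodd hs ht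
  obtain ⟨L, hL⟩ := two_mul_dvd_of_two_mul_mul_dvd_mul hg hodd hmn hdvd1
  rw [mul_assoc] at hL
  have hm2 : 2 * m ∣ r - 1 := by
    refine Nat.Coprime.mul_dvd_of_dvd_of_dvd hodd.coprime_two_left (by omega)
      (hmn.dvd_of_dvd_mul_left (Nat.dvd_of_mul_dvd_mul_right hg ?_))
    rwa [mul_right_comm n] at hdvd2
  obtain ⟨j, hj⟩ := hgcd.two_dvd
  have hq1' : m * (g * f1) = Fintype.card F - 1 := by rw [hF, hq1, mul_assoc]
  have hq2' : n * (g * f2) = Fintype.card F - 1 := by rw [hF, hq2, mul_assoc]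
  obtain ⟨S, rfl, hS⟩ := exists_finset_forall_pow_eq hq1' (one_pow _) hs
  obtain ⟨D, rfl, hD⟩ := exists_finset_forall_pow_eq hq2' (hgcd.mul_right f2).neg_one_pow ht
  refine exists_isMDSSelfDual_of_pow_eq_one_of_pow_eq_neg_one hF hm2 hL ?_ ?_ hS hD
    (even_add_mul_of_even_div_add_div hodd he2 hL heven) ?_ hn1
  · refine Nat.eq_of_mul_eq_mul_left hg ?_
    linarith
  · exact ⟨j, by rw [← hq1', hj]; ring⟩
  · refine even_iff_two_dvd.2 (Nat.dvd_of_mul_dvd_mul_left two_pos ?_)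
    rwa [hL, mul_left_comm, mul_comm (D.card - 1), show 4 = 2 * 2 from rfl] at h4

/-- Theorem 3.3(3): if `(r+1)/2·(t·e₁/e₂ + t)` is even, `4 ∣ (t−1)(r+1)` and
`n₁ = s·f₁ + t·f₂` is even, there is a `q`-ary MDS self-dual code of length `n₁ + 2`,
where `q = r²`. -/
theorem mds_self_dual_thm3_even_length_add_two
    (r e1 f1 e2 f2 s t l : ℕ)
    (hr_odd : Odd r) (hr_pp : IsPrimePow r)
    (hq1 : r ^ 2 - 1 = e1 * f1) (hq2 : r ^ 2 - 1 = e2 * f2)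
    (hl : 2 ≤ l) (he1 : e1 % 2 ^ (l + 1) = 2 ^ l) (he2 : 2 ^ l ∣ e2)
    (hdvd1 : 2 * e2 ∣ e1 * (r + 1)) (hdvd2 : e1 ∣ e2 * (r - 1))
    (hs1 : 1 ≤ s) (hs2 : s ≤ e1 / Nat.gcd e1 e2)
    (ht1 : 1 ≤ t) (ht2 : t ≤ e2 / Nat.gcd e1 e2)
    (heven : Even (t * e1 * (r + 1) / (2 * e2) + t * (r + 1) / 2))
    (h4 : 4 ∣ (t - 1) * (r + 1))
    (hn1 : Even (s * f1 + t * f2))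
    (F : Type*) [Field F] [Fintype F] [DecidableEq F]
    (hF : Fintype.card F = r ^ 2) :
    ∃ C : Submodule F (Fin (s * f1 + t * f2 + 2) → F),
      dualCode C = C ∧
      Module.finrank F C = (s * f1 + t * f2 + 2) / 2 ∧
      IsMinDist C ((s * f1 + t * f2 + 2) / 2 + 1) := by
  have hdvd : 2 ^ l ∣ e1 := (Nat.dvd_mod_iff (pow_dvd_pow 2 l.le_succ)).1 (he1 ▸ dvd_rfl)
  exact mds_self_dual_thm3_even_length_add_two_general r e1 f1 e2 f2 s t hq1 hq2
    (even_iff_two_dvd.2 ((dvd_pow_self 2 (by omega)).trans (Nat.dvd_gcd hdvd he2)))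
    (odd_div_gcd_of_mod_two_pow_succ_eq he1 he2) hdvd1 hdvd2 hs2 ht2 heven h4 hn1 F hF
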